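/- arXiv:2201.02410 — 5 statements merged into one kernel-verified Lean document; each statement's English description precedes it below -/
import Mathlib

section
/- The total payment made to the winning workers never exceeds the budget: ∑_{i∈S} p_i ≤ B. -/
open Finset

/-- **Budget feasibility.** Workers are indexed `1, …, n` in nondecreasing order of cost
density `b i / Re i`.  The winning set is `S = {1, …, k}` with `k < n` the largest index
such that `b i / Re i ≤ B / ∑_{j=1}^{i} Re j` for every `i ≤ k`.  With
`ρ* = min (b (k+1) / Re (k+1)) (B / ∑_{j∈S} Re j)`, payment upper bound
`p_i^up = Re i * ρ*`, internal reputations `re i ∈ (0,1]`, temporary reward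
`p_i' = max (B * re i / ∑_{j∈S} re j) (ρ* * re i)` and final payment
`p i = min (p_i^up) (p_i')`, the total payment to the winners never exceeds the
budget: `∑_{i∈S} p i ≤ B`. -/
theorem budget_feasibility
    (n k : ℕ) (hkn : k < n)
    (B : ℝ) (hB : 0 < B)
    (Re b re p : ℕ → ℝ)
    (hRe : ∀ i, 1 ≤ i → i ≤ n → 0 < Re i)
    (hb : ∀ i, 1 ≤ i → i ≤ n → 0 < b i)
    (hsorted : ∀ i j, 1 ≤ i → i ≤ j → j ≤ n → b i / Re i ≤ b j / Re j)
    (hsel : ∀ i, 1 ≤ i → i ≤ k → b i / Re i ≤ B / ∑ j ∈ Finset.Icc 1 i, Re j)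
    (hmax : ¬ (b (k + 1) / Re (k + 1) ≤ B / ∑ j ∈ Finset.Icc 1 (k + 1), Re j))
    (hre : ∀ i, 1 ≤ i → i ≤ k → 0 < re i ∧ re i ≤ 1)
    (ρstar : ℝ)
    (hρ : ρstar = min (b (k + 1) / Re (k + 1)) (B / ∑ j ∈ Finset.Icc 1 k, Re j))
    (hp : ∀ i, 1 ≤ i → i ≤ k →
      p i = min (Re i * ρstar)
        (max (B * re i / ∑ j ∈ Finset.Icc 1 k, re j) (ρstar * re i))) :
    ∑ i ∈ Finset.Icc 1 k, p i ≤ B := by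
  have hS : 0 ≤ ∑ j ∈ Finset.Icc 1 k, Re j := by
    apply Finset.sum_nonneg
    intro i hi
    rw [Finset.mem_Icc] at hi
    exact (hRe i hi.1 (by omega)).le
  have h1 : ∑ i ∈ Finset.Icc 1 k, p i ≤ ∑ i ∈ Finset.Icc 1 k, Re i * ρstar := by
    apply Finset.sum_le_sum
    intro i hi
    rw [Finset.mem_Icc] at hi
    rw [hp i hi.1 hi.2]
    exact min_le_left _ _
  have h2 : ρstar ≤ B / ∑ j ∈ Finset.Icc 1 k, Re j := by
    rw [hρ]
    exact min_le_right _ _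
  rw [← Finset.sum_mul] at h1
  refine h1.trans ((mul_le_mul_of_nonneg_left h2 hS).trans ?_)
  rcases hS.eq_or_lt with h0 | h0
  · rw [← h0, zero_mul]
    exact hB.le
  · rw [mul_div_cancel₀ _ h0.ne']
end

section
/- (Individual rationality of honest workers) Suppose worker i ∈ S bids truthfully, b_i = c_i where c_i > 0 is his true cost, and is honest, i.e. his internal reputation satisfies re_i ≥ Re_i. Then his utility is nonnegative: p_i − c_i ≥ 0. -/
open Finset

/-- **Individual rationality of honest workers.**  If a winning worker `i ∈ S = {1,…,k}`
bids truthfully (`b i = c`, his true cost `c > 0`) and is honest (`re i ≥ Re i`), then his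
utility `p i - c` is nonnegative, where
`p i = min (Re i * ρ*) (max (B * re i / ∑_{j∈S} re j) (ρ* * re i))`. -/
theorem individual_rationality_honest
    (n k : ℕ) (hkn : k < n)
    (B : ℝ) (hB : 0 < B)
    (Re b re p : ℕ → ℝ)
    (hRe : ∀ i, 1 ≤ i → i ≤ n → 0 < Re i)
    (hb : ∀ i, 1 ≤ i → i ≤ n → 0 < b i)
    (hsorted : ∀ i j, 1 ≤ i → i ≤ j → j ≤ n → b i / Re i ≤ b j / Re j)
    (hsel : ∀ i, 1 ≤ i → i ≤ k → b i / Re i ≤ B / ∑ j ∈ Finset.Icc 1 i, Re j)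
    (hmax : ¬ (b (k + 1) / Re (k + 1) ≤ B / ∑ j ∈ Finset.Icc 1 (k + 1), Re j))
    (hre : ∀ i, 1 ≤ i → i ≤ k → 0 < re i ∧ re i ≤ 1)
    (ρstar : ℝ)
    (hρ : ρstar = min (b (k + 1) / Re (k + 1)) (B / ∑ j ∈ Finset.Icc 1 k, Re j))
    (hp : ∀ i, 1 ≤ i → i ≤ k →
      p i = min (Re i * ρstar)
        (max (B * re i / ∑ j ∈ Finset.Icc 1 k, re j) (ρstar * re i)))
    (i : ℕ) (hi1 : 1 ≤ i) (hik : i ≤ k)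
    (c : ℝ) (hc : 0 < c) (htruth : b i = c)
    (honest : Re i ≤ re i) :
    0 ≤ p i - c := by
  have hRi : 0 < Re i := hRe i hi1 (by omega)
  have hle : b i / Re i ≤ ρstar := by
    rw [hρ]
    refine le_min (hsorted i (k + 1) hi1 (by omega) (by omega)) ?_
    exact (hsorted i k hi1 hik (by omega)).trans (hsel k (by omega) le_rfl)
  have hbi : 0 < b i := hb i hi1 (by omega)
  have hρ0 : 0 ≤ ρstar := (div_pos hbi hRi).le.trans hle
  have h1 : b i ≤ Re i * ρstar := by
    rw [div_le_iff₀ hRi] at hle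
    linarith
  have h2 : Re i * ρstar ≤ ρstar * re i := by
    rw [mul_comm]
    exact mul_le_mul_of_nonneg_left honest hρ0
  rw [hp i hi1 hik, ← htruth, sub_nonneg]
  exact le_min h1 ((h1.trans h2).trans (le_max_right _ _))
end

section
/- (Underbidding yields nonpositive utility) Fix the bids of all workers other than i, and let c_i > 0 be worker i's true cost. Suppose worker i loses when bidding c_i but wins when bidding some b_i < c_i. Then under the bid b_i his payment satisfies p_i ≤ ρ*·Re_i ≤ c_i, so his utility p_i − c_i ≤ 0. -/
open Finset

/-- The outcome of the proportional-share selection rule under bid profile `b`: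
`σ` sorts the workers into nondecreasing cost-density order (`σ m` is the worker in
position `m`), and the winning set is the maximal prefix of length `k` of the sorted
order on which the selection condition holds. -/
def IsOutcome (n : ℕ) (B : ℝ) (Re b : Fin n → ℝ) (σ : Equiv.Perm (Fin n)) (k : ℕ) : Prop :=
  k ≤ n ∧
  (∀ m m' : Fin n, m ≤ m' → b (σ m) / Re (σ m) ≤ b (σ m') / Re (σ m')) ∧
  (∀ m : Fin n, (m : ℕ) < k →
    b (σ m) / Re (σ m) ≤ B / ∑ j ∈ Finset.Iic m, Re (σ j)) ∧
  (∀ m : Fin n, (m : ℕ) = k →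
    ¬ (b (σ m) / Re (σ m) ≤ B / ∑ j ∈ Finset.Iic m, Re (σ j)))

/-- The winning set of workers: the image under the sorting permutation `σ` of the first
`k` positions. -/
def winSet (n : ℕ) (σ : Equiv.Perm (Fin n)) (k : ℕ) : Finset (Fin n) :=
  (Finset.univ.filter fun m : Fin n => (m : ℕ) < k).image σ

/-- The payment density threshold `ρ* = min (b_{k+1} / Re_{k+1}) (B / ∑_{j∈S} Re j)`
(when all `n` workers win, it degenerates to `B / ∑_{j∈S} Re j`). -/
noncomputable def rhoStar (n : ℕ) (B : ℝ) (Re b : Fin n → ℝ) (σ : Equiv.Perm (Fin n))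
    (k : ℕ) : ℝ :=
  if hkn : k < n then
    min (b (σ ⟨k, hkn⟩) / Re (σ ⟨k, hkn⟩)) (B / ∑ i ∈ winSet n σ k, Re i)
  else B / ∑ i ∈ winSet n σ k, Re i

/-- The payment to a winning worker `i`:
`p i = min (Re i * ρ*) (max (B * re i / ∑_{j∈S} re j) (ρ* * re i))`. -/
noncomputable def payment (n : ℕ) (B : ℝ) (Re b re : Fin n → ℝ) (σ : Equiv.Perm (Fin n))
    (k : ℕ) (i : Fin n) : ℝ :=
  min (Re i * rhoStar n B Re b σ k)
    (max (B * re i / ∑ j ∈ winSet n σ k, re j) (rhoStar n B Re b σ k * re i))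

/-- **Underbidding yields nonpositive utility.**  Fix the bids of all workers other than
`i0` and let `c = bT i0 > 0` be worker `i0`'s true cost.  Suppose worker `i0` loses when
bidding truthfully (profile `bT`) but wins when bidding some smaller `bL i0 < bT i0`
(profile `bL`).  Then under the bid `bL i0` his payment satisfies
`p ≤ ρ* * Re i0 ≤ c`, so his utility `p - c` is nonpositive. -/
theorem underbidding_nonpositive_utility
    (n : ℕ) (B : ℝ) (hB : 0 < B)
    (Re : Fin n → ℝ) (hRe : ∀ i, 0 < Re i)
    (bT bL re : Fin n → ℝ) (hbT : ∀ i, 0 < bT i) (hbL : ∀ i, 0 < bL i)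
    (hre : ∀ i, 0 < re i ∧ re i ≤ 1)
    (i0 : Fin n) (hunder : bL i0 < bT i0) (hother : ∀ j, j ≠ i0 → bL j = bT j)
    (σT σL : Equiv.Perm (Fin n)) (kT kL : ℕ)
    (hOT : IsOutcome n B Re bT σT kT) (hOL : IsOutcome n B Re bL σL kL)
    (hlose : i0 ∉ winSet n σT kT) (hwin : i0 ∈ winSet n σL kL) :
    payment n B Re bL re σL kL i0 ≤ rhoStar n B Re bL σL kL * Re i0 ∧
    rhoStar n B Re bL σL kL * Re i0 ≤ bT i0 ∧
    payment n B Re bL re σL kL i0 - bT i0 ≤ 0 := by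
  have key : rhoStar n B Re bL σL kL * Re i0 ≤ bT i0 := by
    by_contra hcon
    push Not at hcon
    have hd : bT i0 / Re i0 < rhoStar n B Re bL σL kL := by
      rw [div_lt_iff₀ (hRe i0)]
      exact hcon
    obtain ⟨-, hsT, -, hfT⟩ := hOT
    obtain ⟨-, hsL, -, -⟩ := hOL
    have memW : ∀ (σ : Equiv.Perm (Fin n)) (k : ℕ) (j : Fin n),
        j ∈ winSet n σ k ↔ ((σ.symm j : Fin n) : ℕ) < k := by
      intro σ k j
      simp only [winSet, Finset.mem_image, Finset.mem_filter, Finset.mem_univ, true_and]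
      constructor
      · rintro ⟨m, hm, rfl⟩
        simpa using hm
      · intro h
        exact ⟨σ.symm j, h, by simp⟩
    rw [memW] at hlose
    push Not at hlose
    have hkn : kT < n := lt_of_le_of_lt hlose (σT.symm i0).isLt
    have hfail := hfT ⟨kT, hkn⟩ rfl
    push Not at hfail
    have hwd : bT (σT ⟨kT, hkn⟩) / Re (σT ⟨kT, hkn⟩) ≤ bT i0 / Re i0 := by
      have := hsT ⟨kT, hkn⟩ (σT.symm i0) hlose
      simpa using this
    have hrB : rhoStar n B Re bL σL kL ≤ B / ∑ i ∈ winSet n σL kL, Re i := by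
      unfold rhoStar
      split_ifs
      · exact min_le_right _ _
      · exact le_rfl
    have hloser : ∀ j, j ∉ winSet n σL kL → rhoStar n B Re bL σL kL ≤ bL j / Re j := by
      intro j hj
      rw [memW] at hj
      push Not at hj
      have hk : kL < n := lt_of_le_of_lt hj (σL.symm j).isLt
      have h1 := hsL ⟨kL, hk⟩ (σL.symm j) hj
      rw [Equiv.apply_symm_apply] at h1
      unfold rhoStar
      rw [dif_pos hk]
      exact (min_le_left _ _).trans h1
    have hsub : (Finset.Iic (⟨kT, hkn⟩ : Fin n)).image σT ⊆ winSet n σL kL := by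
      intro j hj
      obtain ⟨m, hm, rfl⟩ := Finset.mem_image.1 hj
      by_cases h0 : σT m = i0
      · rw [h0]; exact hwin
      · by_contra hn
        have h1 := hloser _ hn
        rw [hother _ h0] at h1
        have h2 := hsT m ⟨kT, hkn⟩ (Finset.mem_Iic.1 hm)
        linarith
    have hsum : ∑ j ∈ Finset.Iic (⟨kT, hkn⟩ : Fin n), Re (σT j)
        ≤ ∑ i ∈ winSet n σL kL, Re i := by
      rw [← Finset.sum_image (f := Re) (g := σT) (fun a _ b _ h => σT.injective h)]
      exact Finset.sum_le_sum_of_subset_of_nonneg hsub (fun i _ _ => (hRe i).le)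
    have hpos : 0 < ∑ j ∈ Finset.Iic (⟨kT, hkn⟩ : Fin n), Re (σT j) :=
      Finset.sum_pos (fun j _ => hRe _) ⟨_, Finset.mem_Iic.2 le_rfl⟩
    have hdiv := div_le_div_of_nonneg_left hB.le hpos hsum
    linarith
  have hpay : payment n B Re bL re σL kL i0 ≤ rhoStar n B Re bL σL kL * Re i0 := by
    unfold payment
    rw [mul_comm (rhoStar n B Re bL σL kL) (Re i0)]
    exact min_le_left _ _
  exact ⟨hpay, key, by linarith⟩
end

section
/- The function q(x) = x·h(x), where h(x) = 1 − (19/(10π))·arctan(10x/π), is strictly increasing on the interval [0,1]. -/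
open Real

/-- The influence function `h(x) = 1 - (19/(10π))·arctan(10x/π)` of the latest internal
reputation on the attenuation coefficient. -/
noncomputable def h (x : ℝ) : ℝ := -(19 / (10 * π)) * arctan (10 * x / π) + 1

/-- `q(x) = h(x)·x`. -/
noncomputable def q (x : ℝ) : ℝ := x * h x

theorem arctan_add_le_aux (t : ℝ) : arctan t + t / (1 + t ^ 2) ≤ π / 2 := by
  have h1 : sin (π - 2 * arctan t) ≤ π - 2 * arctan t :=
    sin_le (by linarith [arctan_lt_pi_div_two t])
  have hp : (0 : ℝ) < 1 + t ^ 2 := by positivity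
  have h2 : sin (π - 2 * arctan t) = 2 * (t / (1 + t ^ 2)) := by
    rw [sin_pi_sub, sin_two_mul, sin_arctan, cos_arctan]
    have h3 : √(1 + t ^ 2) * √(1 + t ^ 2) = 1 + t ^ 2 := mul_self_sqrt hp.le
    rw [mul_assoc, div_mul_div_comm, h3, mul_one]
  linarith

theorem q_hasDerivAt_aux (x : ℝ) : HasDerivAt q
    (1 - 19 / (10 * π) * (arctan (10 * x / π) + (10 * x / π) / (1 + (10 * x / π) ^ 2))) x := by
  have h1 : HasDerivAt (fun x : ℝ => 10 * x / π) (10 * 1 / π) x :=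
    ((hasDerivAt_id x).const_mul 10).div_const π
  have h2 := (hasDerivAt_id x).mul ((h1.arctan.const_mul (-(19 / (10 * π)))).add_const 1)
  refine HasDerivAt.congr_deriv (f := q) h2 ?_
  simp only [id]
  ring

/-- **`q` is strictly increasing on `[0,1]`.**  The function `q(x) = x·h(x)`, where
`h(x) = 1 - (19/(10π))·arctan(10x/π)`, is strictly increasing on the interval `[0,1]`. -/
theorem q_strictMonoOn : StrictMonoOn q (Set.Icc 0 1) := by
  refine StrictMono.strictMonoOn (strictMono_of_deriv_pos fun x => ?_) _
  rw [(q_hasDerivAt_aux x).deriv]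
  have h1 := mul_le_mul_of_nonneg_left (arctan_add_le_aux (10 * x / π))
    (show 0 ≤ 19 / (10 * π) by positivity)
  have h2 : 19 / (10 * π) * (π / 2) = 19 / 20 := by
    field_simp
    norm_num
  linarith
end

section
/- (Monotonicity of the reputation update in the internal reputation) Let h(x) = 1 − (19/(10π))·arctan(10x/π). For all x, y, R with 0 ≤ y < x ≤ 1 and 0 ≤ R ≤ 1, one has h(x)·x + (1 − h(x))·R > h(y)·y + (1 − h(y))·R. That is, if two workers have equal prior accumulated reputation R and the influence of consecutive good/bad task counts is ignored, the worker with the strictly larger internal reputation obtains the strictly larger updated accumulated reputation. -/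
open Real

/-- The elementary bound `arctan u + u/(1+u²) ≤ π/2`. -/
lemma arctan_add_le (u : ℝ) : arctan u + u / (1 + u ^ 2) ≤ π / 2 := by
  have h1 : sin (2 * arctan u) = 2 * (u / (1 + u ^ 2)) := by
    have hc : cos (arctan u) ≠ 0 := (cos_arctan_pos u).ne'
    have hs : sin (arctan u) = u * cos (arctan u) := by
      have := tan_mul_cos hc
      rw [tan_arctan] at this
      exact this.symm
    rw [sin_two_mul, hs]
    have := cos_sq_arctan u
    calc 2 * (u * cos (arctan u)) * cos (arctan u) = 2 * u * cos (arctan u) ^ 2 := by ring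
      _ = _ := by rw [this]; ring
  have h2 : sin (π - 2 * arctan u) ≤ π - 2 * arctan u := by
    apply sin_le
    have := arctan_lt_pi_div_two u
    linarith
  rw [sin_pi_sub, h1] at h2
  linarith

lemma h_mul_strictMono : StrictMono (fun x : ℝ => h x * x) := by
  have hd : ∀ x : ℝ, HasDerivAt (fun x : ℝ => h x * x)
      ((-(19 / (10 * π)) * (1 / (1 + (10 * x / π) ^ 2) * (10 * 1 / π))) * x + h x * 1) x := by
    intro x
    have h1 : HasDerivAt (fun x : ℝ => 10 * x / π) (10 * 1 / π) x :=
      ((hasDerivAt_id x).const_mul 10).div_const π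
    have h2 := ((h1.arctan.const_mul (-(19 / (10 * π)))).add_const 1)
    exact HasDerivAt.mul h2 (hasDerivAt_id x)
  apply strictMono_of_deriv_pos
  intro x
  rw [(hd x).deriv]
  have hb := arctan_add_le (10 * x / π)
  have hc : 0 < 19 / (10 * π) := by positivity
  have hm := mul_le_mul_of_nonneg_left hb hc.le
  have he : 19 / (10 * π) * (π / 2) = 19 / 20 := by field_simp; norm_num
  rw [he] at hm
  have e2 : (-(19 / (10 * π)) * (1 / (1 + (10 * x / π) ^ 2) * (10 * 1 / π))) * x + h x * 1
      = 1 - 19 / (10 * π) * (arctan (10 * x / π) + (10 * x / π) / (1 + (10 * x / π) ^ 2)) := by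
    unfold h
    ring
  rw [e2]
  linarith

lemma h_anti {x y : ℝ} (hyx : y < x) : h x ≤ h y := by
  unfold h
  have h1 : arctan (10 * y / π) ≤ arctan (10 * x / π) := by
    apply arctan_strictMono.monotone
    have := pi_pos
    gcongr
  have hc : 0 < 19 / (10 * π) := by positivity
  have := mul_le_mul_of_nonneg_left h1 hc.le
  linarith

theorem reputation_update_strict_mono
    (x y R : ℝ) (hy : 0 ≤ y) (hyx : y < x) (hx : x ≤ 1) (hR0 : 0 ≤ R) (hR1 : R ≤ 1) :
    h y * y + (1 - h y) * R < h x * x + (1 - h x) * R := by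
  have h1 : h y * y < h x * x := h_mul_strictMono hyx
  have h2 := mul_le_mul_of_nonneg_right (h_anti hyx) hR0
  linarith
end
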